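/- arXiv:1312.2153 — 2 statements merged into one kernel-verified Lean document; each statement's English description precedes it below -/
import Mathlib

section
/- For every x < 0, lim_{n→∞} P(ρ_n|X| + √(1-ρ_n²)·Y > 1 + u_n·x) / (u_n^{1/2}·(1-F(1-u_n))) = 2·I_α·|x|^{1/2+α}, where I_α = (1/√(2π))·Γ(α+1)/Γ(α+3/2). -/
open MeasureTheory Filter Real Set ProbabilityTheory Topology

noncomputable def Ialpha (α : ℝ) : ℝ :=
  (Real.sqrt (2 * Real.pi))⁻¹ * (Real.Gamma (α + 1) / Real.Gamma (α + 3 / 2))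

noncomputable def Upsilon (α t : ℝ) : ℝ :=
  (∫ s in Set.Icc (-1 : ℝ) (min t 1), (1 - s ^ 2) ^ α) /
    (∫ s in Set.Icc (-1 : ℝ) 1, (1 - s ^ 2) ^ α)

/-!
On `{X ≥ 0}` the variable `ρ|X| + √(1 - ρ²) Y` is `R cos (Θ - arccos ρ)`, and `{X < 0}` contributes
a mirror image. So the event that it exceeds `a` consists of two circular caps of the unit disc,
both congruent to `{X > a}`. When `1 - a² ≤ ρ²` the two caps do not overlap and rotation invariance
gives exactly `P(ρ|X| + √(1 - ρ²) Y > a) = 2 P(X > a)`. With `a = 1 + u x`, the condition holds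
eventually as soon as `u = o(ρ²)`, and what is left is the tail of the single variable `X`:
conditioning on `Θ = √t s` turns `P(X > 1 - t y) / (√t P(R > 1 - t))` into an integral over `s` that
converges, by regular variation and dominated convergence, to a multiple of
`∫ (y - s² / 2)₊ ^ α ds`, a Beta integral.
-/

section BetaIntegral

lemma integral_rpow_mul_one_sub_rpow {a b : ℝ} (ha : 0 < a) (hb : 0 < b) :
    ∫ t in (0 : ℝ)..1, t ^ (a - 1) * (1 - t) ^ (b - 1) = beta a b := by
  have hcast : ∀ t ∈ uIcc (0 : ℝ) 1, (t : ℂ) ^ ((a : ℂ) - 1) * (1 - (t : ℂ)) ^ ((b : ℂ) - 1)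
      = ((t ^ (a - 1) * (1 - t) ^ (b - 1) : ℝ) : ℂ) := by
    intro t ht
    rw [uIcc_of_le zero_le_one] at ht
    push_cast [Complex.ofReal_cpow ht.1, Complex.ofReal_cpow (sub_nonneg.2 ht.2)]
    rfl
  rw [beta_eq_betaIntegralReal a b ha hb, Complex.betaIntegral,
    intervalIntegral.integral_congr hcast, intervalIntegral.integral_ofReal, Complex.ofReal_re]

lemma two_mul_four_rpow_mul_beta_self {α : ℝ} (hα : -1 < α) :
    2 * (4 ^ α * beta (α + 1) (α + 1)) = √π * Gamma (α + 1) / Gamma (α + 3 / 2) := by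
  have duplication := Gamma_mul_Gamma_add_half (α + 1)
  rw [show α + 1 + 1 / 2 = α + 3 / 2 by ring] at duplication
  have powers : (2 : ℝ) ^ (1 - 2 * (α + 1)) * (2 * 4 ^ α) = 1 := by
    rw [show (4 : ℝ) = 2 ^ (2 : ℝ) by norm_num, ← rpow_mul zero_le_two]
    rw [mul_left_comm, ← rpow_add two_pos,
      show 1 - 2 * (α + 1) + 2 * α = -1 by ring, rpow_neg_one, mul_inv_cancel₀ two_ne_zero]
  have := Gamma_pos_of_pos (show 0 < α + 3 / 2 by linarith)
  have := Gamma_pos_of_pos (show 0 < 2 * (α + 1) by linarith)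
  rw [beta, ← two_mul (α + 1), mul_div_assoc', mul_div_assoc',
    div_eq_div_iff (by positivity) (by positivity)]
  linear_combination
    (2 * 4 ^ α * Gamma (α + 1)) * duplication + (Gamma (α + 1) * Gamma (2 * (α + 1)) * √π) * powers

lemma integral_one_sub_sq_rpow {α : ℝ} (hα : -1 < α) :
    ∫ v in (-1 : ℝ)..1, (1 - v ^ 2) ^ α = √π * Gamma (α + 1) / Gamma (α + 3 / 2) := by
  have hbeta := integral_rpow_mul_one_sub_rpow (neg_lt_iff_pos_add.1 hα) (neg_lt_iff_pos_add.1 hα)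
  simp only [add_sub_cancel_right] at hbeta
  calc ∫ v in (-1 : ℝ)..1, (1 - v ^ 2) ^ α
      = 2 * ∫ t in (0 : ℝ)..1, (1 - (2 * t - 1) ^ 2) ^ α := by
        rw [← smul_eq_mul, intervalIntegral.smul_integral_comp_mul_sub
          (fun v : ℝ => (1 - v ^ 2) ^ α)]
        congr 1 <;> norm_num
    _ = 2 * ∫ t in (0 : ℝ)..1, 4 ^ α * (t ^ α * (1 - t) ^ α) := by
        congr 1
        refine intervalIntegral.integral_congr fun t ht => ?_
        rw [uIcc_of_le zero_le_one] at ht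
        have h1t : 0 ≤ 1 - t := sub_nonneg.2 ht.2
        rw [show 1 - (2 * t - 1) ^ 2 = 4 * (t * (1 - t)) by ring,
          mul_rpow zero_le_four (mul_nonneg ht.1 h1t), mul_rpow ht.1 h1t]
    _ = √π * Gamma (α + 1) / Gamma (α + 3 / 2) := by
        rw [intervalIntegral.integral_const_mul, hbeta, two_mul_four_rpow_mul_beta_self hα]

lemma max_one_sub_sq_zero_rpow {α : ℝ} (hα : α ≠ 0) (v : ℝ) :
    (max (1 - v ^ 2) 0) ^ α = (Ioc (-1 : ℝ) 1).indicator (fun v => (1 - v ^ 2) ^ α) v := by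
  by_cases hv : v ∈ Ioc (-1 : ℝ) 1
  · rw [indicator_of_mem hv, max_eq_left (by nlinarith [hv.1, hv.2])]
  · have : 1 - v ^ 2 ≤ 0 := by
      rw [mem_Ioc, not_and_or, not_lt, not_le] at hv
      rcases hv with h | h <;> nlinarith
    rw [indicator_of_notMem hv, max_eq_right this, zero_rpow hα]

lemma integral_max_sub_sq_div_two_rpow {α y : ℝ} (hα : -1 < α) (hα0 : α ≠ 0) (hy : 0 < y) :
    ∫ s : ℝ, (max (y - s ^ 2 / 2) 0) ^ α = 2 * π * (Ialpha α * y ^ (1 / 2 + α)) := by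
  have rescale : ∀ v : ℝ, (max (y - (√(2 * y) * v) ^ 2 / 2) 0) ^ α
      = y ^ α * (max (1 - v ^ 2) 0) ^ α := by
    intro v
    rw [mul_pow, sq_sqrt (by positivity), ← mul_rpow hy.le (le_max_right _ _),
      mul_max_of_nonneg _ _ hy.le, mul_zero]
    ring_nf
  have hsubst := Measure.integral_comp_mul_left
    (fun s : ℝ => (max (y - s ^ 2 / 2) 0) ^ α) (√(2 * y))
  simp_rw [rescale, max_one_sub_sq_zero_rpow hα0] at hsubst
  rw [integral_const_mul, integral_indicator measurableSet_Ioc,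
    ← intervalIntegral.integral_of_le (by norm_num), integral_one_sub_sq_rpow hα,
    abs_of_pos (by positivity), smul_eq_mul, eq_inv_mul_iff_mul_eq₀ (by positivity)] at hsubst
  have hπ : √2 * √π = 2 * π * (√(2 * π))⁻¹ := by
    rw [← sqrt_mul zero_le_two, eq_mul_inv_iff_mul_eq₀ (by positivity),
      mul_self_sqrt (by positivity)]
  rw [← hsubst, Ialpha, rpow_add hy, ← sqrt_eq_rpow, sqrt_mul zero_le_two]
  linear_combination (√y * y ^ α * (Gamma (α + 1) / Gamma (α + 3 / 2))) * hπ

end BetaIntegral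

section WeibullTail

/-- `T = 1 - F` is the tail of a distribution function `F` with right endpoint `1` lying in the
Weibull max-domain of attraction with index `α`. -/
structure IsWeibullTail (T : ℝ → ℝ) (α : ℝ) : Prop where
  index_pos : 0 < α
  antitone : Antitone T
  eq_zero_of_one_le : ∀ c, 1 ≤ c → T c = 0
  tendsto_ratio : ∀ y > 0, Tendsto (fun t => T (1 - t * y) / T (1 - t)) (𝓝[>] 0) (𝓝 (y ^ α))

variable {T : ℝ → ℝ} {α t y z : ℝ}

lemma IsWeibullTail.nonneg (hT : IsWeibullTail T α) (c : ℝ) : 0 ≤ T c :=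
  (hT.eq_zero_of_one_le _ (le_max_right c 1)).symm.le.trans (hT.antitone (le_max_left c 1))

lemma IsWeibullTail.ratio_le_ratio (hT : IsWeibullTail T α) (ht : 0 < t) (hyz : y ≤ z) :
    T (1 - t * y) / T (1 - t) ≤ T (1 - t * z) / T (1 - t) :=
  div_le_div_of_nonneg_right (hT.antitone (by gcongr)) (hT.nonneg _)

lemma IsWeibullTail.tendsto_ratio_of_tendsto (hT : IsWeibullTail T α) {z : ℝ → ℝ} {L : ℝ}
    (hz : Tendsto z (𝓝[>] 0) (𝓝 L)) :
    Tendsto (fun t => T (1 - t * z t) / T (1 - t)) (𝓝[>] 0) (𝓝 ((max L 0) ^ α)) := by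
  have hcont (w : ℝ) : ContinuousAt (· ^ α) w :=
    continuousAt_rpow_const _ _ (Or.inr hT.index_pos.le)
  refine tendsto_order.2 ⟨fun b hb => ?_, fun b hb => ?_⟩
  · rcases le_or_gt L 0 with hL | hL
    · rw [max_eq_right hL, zero_rpow hT.index_pos.ne'] at hb
      exact .of_forall fun t => hb.trans_le (div_nonneg (hT.nonneg _) (hT.nonneg _))
    · rw [max_eq_left hL.le] at hb
      obtain ⟨w, ⟨hbw, hw⟩, hwL⟩ := (((((hcont L).eventually (lt_mem_nhds hb)).and
        (lt_mem_nhds hL)).filter_mono nhdsWithin_le_nhds).and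
        (self_mem_nhdsWithin (s := Iio L))).exists
      filter_upwards [(hT.tendsto_ratio w hw).eventually (lt_mem_nhds hbw),
        hz.eventually (lt_mem_nhds hwL), self_mem_nhdsWithin] with t hbt hwz ht
      exact hbt.trans_le (hT.ratio_le_ratio ht hwz.le)
  · obtain ⟨w, hwb, hw⟩ := ((((hcont (max L 0)).eventually (gt_mem_nhds hb)).filter_mono
      nhdsWithin_le_nhds).and (self_mem_nhdsWithin (s := Ioi (max L 0)))).exists
    obtain ⟨hLw, hw0⟩ := max_lt_iff.1 hw
    filter_upwards [(hT.tendsto_ratio w hw0).eventually (gt_mem_nhds hwb),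
      hz.eventually (gt_mem_nhds hLw), self_mem_nhdsWithin] with t htb hzw ht
    exact (hT.ratio_le_ratio ht hzw.le).trans_lt htb

end WeibullTail

section ScaledTail

/-- If `T` is the tail of a nonnegative random variable `R`, then `scaledTail T a c` is the
probability that `c R > a`, for every real `c` and every level `a ≥ 0`. -/
noncomputable def scaledTail (T : ℝ → ℝ) (a c : ℝ) : ℝ :=
  if 0 < c then T (a / c) else 0

variable {T : ℝ → ℝ} {α a c : ℝ}

lemma scaledTail_of_pos (hc : 0 < c) : scaledTail T a c = T (a / c) :=
  if_pos hc

lemma scaledTail_of_nonpos (hc : c ≤ 0) : scaledTail T a c = 0 :=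
  if_neg hc.not_gt

lemma IsWeibullTail.scaledTail_nonneg (hT : IsWeibullTail T α) : 0 ≤ scaledTail T a c := by
  unfold scaledTail
  split_ifs
  exacts [hT.nonneg _, le_rfl]

lemma IsWeibullTail.monotone_scaledTail (hT : IsWeibullTail T α) (ha : 0 ≤ a) :
    Monotone (scaledTail T a) := by
  intro c d hcd
  rcases le_or_gt c 0 with hc | hc
  · exact (scaledTail_of_nonpos hc).trans_le hT.scaledTail_nonneg
  · rw [scaledTail_of_pos hc, scaledTail_of_pos (hc.trans_le hcd)]
    exact hT.antitone (div_le_div_of_nonneg_left ha hc hcd)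

lemma IsWeibullTail.scaledTail_le (hT : IsWeibullTail T α) (ha : 0 ≤ a) (hc : c ≤ 1) :
    scaledTail T a c ≤ T a := by
  simpa [scaledTail] using hT.monotone_scaledTail ha hc

lemma IsWeibullTail.scaledTail_eq_zero (hT : IsWeibullTail T α) (hca : c ≤ a) :
    scaledTail T a c = 0 := by
  rcases le_or_gt c 0 with hc | hc
  · exact scaledTail_of_nonpos hc
  · rw [scaledTail_of_pos hc, hT.eq_zero_of_one_le _ ((one_le_div₀ hc).2 hca)]

end ScaledTail

section Caps

lemma integral_eq_two_mul_of_periodic_of_reflection {G : ℝ → ℝ} (hG : Function.Periodic G (2 * π))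
    (hrefl : ∀ θ, G (π - θ) = G θ) (hint : ∀ a b, IntervalIntegrable G volume a b) :
    ∫ θ in (-π)..π, G θ = 2 * ∫ θ in (-(π / 2))..(π / 2), G θ := by
  have hshift := hG.intervalIntegral_add_eq (-π) (-(π / 2))
  rw [show -π + 2 * π = π by ring, show -(π / 2) + 2 * π = 3 * π / 2 by ring] at hshift
  have hleft : ∫ θ in (π / 2)..(3 * π / 2), G θ = ∫ θ in (-(π / 2))..(π / 2), G θ := by
    have := intervalIntegral.integral_comp_sub_left (a := -(π / 2)) (b := π / 2) G π
    simp_rw [hrefl] at this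
    rw [this]
    ring_nf
  rw [hshift, ← intervalIntegral.integral_add_adjacent_intervals (hint _ (π / 2)) (hint _ _),
    hleft, two_mul]

variable {H : ℝ → ℝ} {ρ a : ℝ}

lemma intervalIntegrable_monotone_comp_of_abs_le (hH : Monotone H) {g : ℝ → ℝ} (hg : Measurable g)
    {C : ℝ} (hC : ∀ θ, |g θ| ≤ C) (c d : ℝ) :
    IntervalIntegrable (fun θ => H (g θ)) volume c d := by
  refine (intervalIntegrable_const (c := max |H (-C)| |H C|)).mono_fun
    (hH.measurable.comp hg).aestronglyMeasurable (ae_of_all _ fun θ => ?_)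
  obtain ⟨hlower, hupper⟩ := abs_le.1 (hC θ)
  exact (abs_le_max_abs_abs (hH hlower) (hH hupper)).trans (le_abs_self _)

lemma integral_comp_abs_cos_add_sin (hH : Monotone H) (hρ : ρ ∈ Icc (0 : ℝ) 1) :
    ∫ θ in (-π)..π, H (ρ * |cos θ| + √(1 - ρ ^ 2) * sin θ)
      = 2 * ∫ φ in (-(π / 2) - arccos ρ)..(π / 2 - arccos ρ), H (cos φ) := by
  have hbound : ∀ θ, |ρ * |cos θ| + √(1 - ρ ^ 2) * sin θ| ≤ |ρ| + |√(1 - ρ ^ 2)| := by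
    intro θ
    refine (abs_add_le _ _).trans ?_
    rw [abs_mul, abs_mul, abs_abs]
    exact add_le_add (mul_le_of_le_one_right (abs_nonneg _) (abs_cos_le_one θ))
      (mul_le_of_le_one_right (abs_nonneg _) (abs_sin_le_one θ))
  rw [integral_eq_two_mul_of_periodic_of_reflection (fun θ => by simp) (fun θ => by simp)
      (intervalIntegrable_monotone_comp_of_abs_le hH (by fun_prop) hbound),
    ← intervalIntegral.integral_comp_sub_right (fun φ => H (cos φ))]
  congr 1
  refine intervalIntegral.integral_congr fun θ hθ => ?_
  rw [uIcc_of_le (by linarith [pi_pos])] at hθ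
  rw [abs_of_nonneg (cos_nonneg_of_mem_Icc hθ), cos_sub, cos_arccos (by linarith [hρ.1]) hρ.2,
    sin_arccos]
  ring_nf

lemma cos_le_of_notMem_Ioc (hρ : ρ ∈ Icc (0 : ℝ) 1) (ha : 0 ≤ a) (haρ : 1 - a ^ 2 ≤ ρ ^ 2) {φ : ℝ}
    (hφ : φ ∈ Ioc (-π) π) (hout : φ ∉ Ioc (-(π / 2) - arccos ρ) (π / 2 - arccos ρ)) :
    cos φ ≤ a := by
  have hδ := arccos_nonneg ρ
  have hδ' := arccos_le_pi_div_two.2 hρ.1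
  rw [mem_Ioc, not_and_or, not_lt, not_le] at hout
  rcases hout with hleft | hright
  · rw [← cos_neg]
    exact (cos_nonpos_of_pi_div_two_le_of_le (by linarith) (by linarith [hφ.1, pi_pos])).trans ha
  · calc cos φ ≤ cos (π / 2 - arccos ρ) :=
          cos_le_cos_of_nonneg_of_le_pi (by linarith) hφ.2 hright.le
      _ = √(1 - ρ ^ 2) := by rw [cos_pi_div_two_sub, sin_arccos]
      _ ≤ a := sqrt_le_left ha |>.2 (by linarith)

lemma integral_comp_abs_cos_add_sin_of_eq_zero (hH : Monotone H) (hH0 : ∀ c ≤ a, H c = 0)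
    (hρ : ρ ∈ Icc (0 : ℝ) 1) (ha : 0 ≤ a) (haρ : 1 - a ^ 2 ≤ ρ ^ 2) :
    ∫ θ in (-π)..π, H (ρ * |cos θ| + √(1 - ρ ^ 2) * sin θ)
      = 2 * ∫ φ in (-π)..π, H (cos φ) := by
  have hδ := arccos_nonneg ρ
  have hδ' := arccos_le_pi_div_two.2 hρ.1
  have hsubset : Ioc (-(π / 2) - arccos ρ) (π / 2 - arccos ρ) ⊆ Ioc (-π) π :=
    Ioc_subset_Ioc (by linarith) (by linarith [pi_pos])
  rw [integral_comp_abs_cos_add_sin hH hρ, intervalIntegral.integral_of_le (by linarith [pi_pos]),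
    intervalIntegral.integral_of_le (by linarith [pi_pos]),
    setIntegral_eq_of_subset_of_forall_sdiff_eq_zero measurableSet_Ioc hsubset
      fun φ hφ => hH0 _ (cos_le_of_notMem_Ioc hρ ha haρ hφ.1 hφ.2)]

end Caps

section Laplace

variable {T : ℝ → ℝ} {α y : ℝ}

lemma one_sub_cos_sqrt_mul_div {t : ℝ} (ht : 0 < t) (s : ℝ) :
    (1 - cos (√t * s)) / t = s ^ 2 / 2 * sinc (√t * s / 2) ^ 2 := by
  rcases eq_or_ne s 0 with rfl | hs
  · simp
  have hst : √t * s / 2 ≠ 0 := by positivity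
  have hhalf : cos (√t * s) = 1 - 2 * sin (√t * s / 2) ^ 2 := by
    rw [sin_sq_eq_half_sub]
    ring_nf
  rw [sinc_of_ne_zero hst, hhalf]
  field_simp
  rw [sq_sqrt ht.le]
  ring

lemma tendsto_one_sub_cos_sqrt_mul_div (s : ℝ) :
    Tendsto (fun t => (1 - cos (√t * s)) / t) (𝓝[>] 0) (𝓝 (s ^ 2 / 2)) := by
  have hcont : Continuous fun t => s ^ 2 / 2 * sinc (√t * s / 2) ^ 2 := by fun_prop
  have hlim := (hcont.tendsto 0).mono_left (nhdsWithin_le_nhds (s := Ioi 0))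
  simp only [sqrt_zero, zero_mul, zero_div, sinc_zero, one_pow, mul_one] at hlim
  refine hlim.congr' ?_
  filter_upwards [self_mem_nhdsWithin] with t ht using (one_sub_cos_sqrt_mul_div ht s).symm

lemma tendsto_sqrt_mul (s : ℝ) : Tendsto (fun t => √t * s) (𝓝[>] 0) (𝓝 0) := by
  have hcont : Continuous fun t => √t * s := by fun_prop
  simpa using (hcont.tendsto 0).mono_left (nhdsWithin_le_nhds (s := Ioi 0))

lemma IsWeibullTail.tendsto_scaledTail_cos_div (hT : IsWeibullTail T α) (y s : ℝ) :
    Tendsto (fun t => scaledTail T (1 - t * y) (cos (√t * s)) / T (1 - t)) (𝓝[>] 0)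
      (𝓝 ((max (y - s ^ 2 / 2) 0) ^ α)) := by
  have hcos : Tendsto (fun t => cos (√t * s)) (𝓝[>] 0) (𝓝 1) := by
    simpa [Function.comp_def] using (continuous_cos.tendsto 0).comp (tendsto_sqrt_mul s)
  have hz : Tendsto (fun t => (y - (1 - cos (√t * s)) / t) / cos (√t * s)) (𝓝[>] 0)
      (𝓝 (y - s ^ 2 / 2)) := by
    simpa [Pi.div_def] using
      ((tendsto_one_sub_cos_sqrt_mul_div s).const_sub y).div hcos one_ne_zero
  refine (hT.tendsto_ratio_of_tendsto hz).congr' ?_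
  filter_upwards [hcos.eventually (lt_mem_nhds one_pos), self_mem_nhdsWithin] with t hc ht
  have ht : 0 < t := ht
  rw [scaledTail_of_pos hc]
  congr 2
  field_simp
  ring

lemma IsWeibullTail.scaledTail_cos_eq_zero (hT : IsWeibullTail T α) {t s : ℝ} (ht : 0 ≤ t)
    (hφ : |√t * s| ≤ π) (hs : π ^ 2 * y / 2 ≤ s ^ 2) :
    scaledTail T (1 - t * y) (cos (√t * s)) = 0 := by
  refine hT.scaledTail_eq_zero ((cos_le_one_sub_mul_cos_sq hφ).trans ?_)
  have hy : y ≤ 2 / π ^ 2 * s ^ 2 := by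
    rw [div_mul_eq_mul_div, le_div_iff₀ (by positivity)]
    linarith
  rw [mul_pow, sq_sqrt ht, mul_left_comm]
  gcongr

lemma IsWeibullTail.norm_indicator_scaledTail_cos_div_le (hT : IsWeibullTail T α) {t : ℝ}
    (ht : 0 < t) (hty : t * y ≤ 1) (s : ℝ) :
    ‖(Ioc (-π / √t) (π / √t)).indicator
        (fun s => scaledTail T (1 - t * y) (cos (√t * s)) / T (1 - t)) s‖
      ≤ (Icc (-√(π ^ 2 * y / 2)) √(π ^ 2 * y / 2)).indicator
        (fun _ => T (1 - t * y) / T (1 - t)) s := by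
  have hsqrt := sqrt_pos.2 ht
  have hrhs := indicator_nonneg (s := Icc (-√(π ^ 2 * y / 2)) √(π ^ 2 * y / 2))
    (fun _ _ => div_nonneg (hT.nonneg (1 - t * y)) (hT.nonneg (1 - t))) s
  by_cases hmem : s ∈ Ioc (-π / √t) (π / √t)
  · rw [indicator_of_mem hmem, Real.norm_of_nonneg (div_nonneg hT.scaledTail_nonneg (hT.nonneg _))]
    by_cases hs : s ^ 2 ≤ π ^ 2 * y / 2
    · rw [indicator_of_mem (mem_Icc.2 (abs_le.1 (abs_le_sqrt hs)))]
      exact div_le_div_of_nonneg_right (hT.scaledTail_le (by linarith) (cos_le_one _))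
        (hT.nonneg _)
    · have hφ : |√t * s| ≤ π := by
        rw [mem_Ioc, div_lt_iff₀ hsqrt, le_div_iff₀ hsqrt] at hmem
        exact abs_le.2 ⟨by linarith [hmem.1], by linarith [hmem.2]⟩
      rwa [hT.scaledTail_cos_eq_zero ht.le hφ (not_le.1 hs).le, zero_div]
  · rwa [indicator_of_notMem hmem, norm_zero]

lemma eventually_mem_Ioc_div_sqrt {A : ℝ} (hA : 0 < A) (s : ℝ) :
    ∀ᶠ t in 𝓝[>] 0, s ∈ Ioc (-A / √t) (A / √t) := by
  filter_upwards [(tendsto_sqrt_mul s).eventually (Ioo_mem_nhds (neg_lt_zero.2 hA) hA),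
    self_mem_nhdsWithin] with t hts ht
  have hsqrt := sqrt_pos.2 ht
  rw [mul_comm] at hts
  exact ⟨(div_lt_iff₀ hsqrt).2 hts.1, (le_div_iff₀ hsqrt).2 hts.2.le⟩

lemma eventually_mul_le_one (y : ℝ) : ∀ᶠ t in 𝓝[>] (0 : ℝ), t * y ≤ 1 := by
  have hcont : Continuous fun t => t * y := by fun_prop
  exact nhdsWithin_le_nhds ((hcont.tendsto 0).eventually_le_const (by simp))

lemma IsWeibullTail.tendsto_integral_indicator_scaledTail_cos_div (hT : IsWeibullTail T α)
    (hy : 0 < y) :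
    Tendsto (fun t => ∫ s, (Ioc (-π / √t) (π / √t)).indicator
        (fun s => scaledTail T (1 - t * y) (cos (√t * s)) / T (1 - t)) s) (𝓝[>] 0)
      (𝓝 (∫ s : ℝ, (max (y - s ^ 2 / 2) 0) ^ α)) := by
  refine tendsto_integral_filter_of_dominated_convergence
    ((Icc (-√(π ^ 2 * y / 2)) √(π ^ 2 * y / 2)).indicator fun _ => y ^ α + 1) ?_ ?_ ?_ ?_
  · filter_upwards [eventually_mul_le_one y] with t ht
    have hmeas := (hT.monotone_scaledTail (sub_nonneg.2 ht)).measurable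
    exact (((hmeas.comp (by fun_prop)).div_const _).indicator
      measurableSet_Ioc).aestronglyMeasurable
  · filter_upwards [eventually_mul_le_one y,
      (hT.tendsto_ratio y hy).eventually_le_const (lt_add_one _), self_mem_nhdsWithin]
      with t hty hratio ht
    exact ae_of_all _ fun s => (hT.norm_indicator_scaledTail_cos_div_le ht hty s).trans
      (indicator_le_indicator hratio)
  · exact (integrable_indicator_iff measurableSet_Icc).2 (integrableOn_const (by simp))
  · refine ae_of_all _ fun s => (hT.tendsto_scaledTail_cos_div y s).congr' ?_
    filter_upwards [eventually_mem_Ioc_div_sqrt pi_pos s] with t ht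
    rw [indicator_of_mem ht]

lemma intervalIntegral_eq_mul_integral_indicator_comp_mul {A k : ℝ} (hA : 0 ≤ A) (hk : 0 < k)
    (f : ℝ → ℝ) :
    ∫ φ in (-A)..A, f φ = k * ∫ s, (Ioc (-A / k) (A / k)).indicator (fun s => f (k * s)) s := by
  rw [integral_indicator measurableSet_Ioc,
    ← intervalIntegral.integral_of_le (by gcongr; linarith), ← smul_eq_mul,
    intervalIntegral.smul_integral_comp_mul_left, mul_div_cancel₀ _ hk.ne',
    mul_div_cancel₀ _ hk.ne']

lemma IsWeibullTail.tendsto_integral_scaledTail_cos_div (hT : IsWeibullTail T α) (hy : 0 < y) :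
    Tendsto (fun t => (∫ φ in (-π)..π, scaledTail T (1 - t * y) (cos φ)) / (√t * T (1 - t)))
      (𝓝[>] 0) (𝓝 (2 * π * (Ialpha α * y ^ (1 / 2 + α)))) := by
  rw [← integral_max_sub_sq_div_two_rpow (by linarith [hT.index_pos]) hT.index_pos.ne' hy]
  refine (hT.tendsto_integral_indicator_scaledTail_cos_div hy).congr' ?_
  filter_upwards [self_mem_nhdsWithin] with t ht
  have hsqrt := sqrt_pos.2 ht
  rw [mul_comm √t (T (1 - t)), ← div_div, ← intervalIntegral.integral_div,
    intervalIntegral_eq_mul_integral_indicator_comp_mul pi_pos.le hsqrt,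
    mul_div_cancel_left₀ _ hsqrt.ne']

end Laplace

section Polar

/-- The tail function `a ↦ P(Z > a)` of the real random variable `Z`. -/
def upperTail {Ω : Type*} [MeasurableSpace Ω] (μ : Measure Ω) (Z : Ω → ℝ) (a : ℝ) : ℝ :=
  μ.real {ω | a < Z ω}

variable {Ω : Type*} [MeasurableSpace Ω] {μ : Measure Ω} {R Θ : Ω → ℝ} {α a ρ y : ℝ}

lemma upperTail_congr {Z Z' : Ω → ℝ} (h : Z =ᵐ[μ] Z') : upperTail μ Z = upperTail μ Z' := by
  ext a
  refine measureReal_congr ?_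
  filter_upwards [h] with ω hω
  exact congrArg (a < ·) hω

lemma upperTail_mul_const (hR : ∀ᵐ ω ∂μ, 0 ≤ R ω) (ha : 0 ≤ a) (c : ℝ) :
    upperTail μ (fun ω => R ω * c) a = scaledTail (upperTail μ R) a c := by
  rcases le_or_gt c 0 with hc | hc
  · rw [scaledTail_of_nonpos hc, upperTail, measureReal_def, measure_eq_zero_iff_ae_notMem.2,
      ENNReal.toReal_zero]
    filter_upwards [hR] with ω hω using
      not_lt.2 ((mul_nonpos_of_nonneg_of_nonpos hω hc).trans ha)
  · simp only [scaledTail_of_pos hc, upperTail, div_lt_iff₀ hc]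

variable [IsFiniteMeasure μ]

lemma antitone_upperTail (Z : Ω → ℝ) : Antitone (upperTail μ Z) :=
  fun _ _ hcd => measureReal_mono fun _ h => lt_of_le_of_lt hcd h

lemma measureReal_pair_mem_eq_intervalIntegral {E : Type*} [MeasurableSpace E] {Z : Ω → E}
    (hZ : Measurable Z) (hΘ : Measurable Θ)
    (hΘunif : μ.map Θ = (ENNReal.ofReal (2 * π))⁻¹ • volume.restrict (Ioo (-π) π))
    (hindep : IndepFun Z Θ μ) {S : Set (E × ℝ)} (hS : MeasurableSet S) :
    μ.real {ω | (Z ω, Θ ω) ∈ S} = (2 * π)⁻¹ * ∫ θ in (-π)..π, μ.real {ω | (Z ω, θ) ∈ S} := by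
  have hsection (θ : ℝ) : (μ.map Z) ((fun z => (z, θ)) ⁻¹' S) = μ {ω | (Z ω, θ) ∈ S} :=
    Measure.map_apply hZ (measurable_prodMk_right hS)
  have hsection_meas : Measurable fun θ => μ {ω | (Z ω, θ) ∈ S} := by
    simpa only [hsection] using measurable_measure_prodMk_right (μ := μ.map Z) hS
  have hpair : μ {ω | (Z ω, Θ ω) ∈ S} = ∫⁻ θ, μ {ω | (Z ω, θ) ∈ S} ∂(μ.map Θ) := by
    rw [← lintegral_congr hsection, ← Measure.prod_apply_symm hS,
      ← hindep.map_prod_eq_prod_map_map hZ.aemeasurable hΘ.aemeasurable,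
      Measure.map_apply (hZ.prodMk hΘ) hS]
    rfl
  simp only [measureReal_def]
  rw [hpair, hΘunif, lintegral_smul_measure, intervalIntegral.integral_of_le (by linarith [pi_pos]),
    integral_Ioc_eq_integral_Ioo, integral_toReal hsection_meas.aemeasurable
      (ae_of_all _ fun _ => measure_lt_top _ _)]
  simp [pi_pos.le]

lemma upperTail_mul_comp_eq_integral (hRm : Measurable R) (hΘm : Measurable Θ)
    (hR : ∀ᵐ ω ∂μ, 0 ≤ R ω)
    (hΘunif : μ.map Θ = (ENNReal.ofReal (2 * π))⁻¹ • volume.restrict (Ioo (-π) π))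
    (hindep : IndepFun R Θ μ) {g : ℝ → ℝ} (hg : Measurable g) (ha : 0 ≤ a) :
    upperTail μ (fun ω => R ω * g (Θ ω)) a
      = (2 * π)⁻¹ * ∫ θ in (-π)..π, scaledTail (upperTail μ R) a (g θ) := by
  have hS : MeasurableSet {p : ℝ × ℝ | a < p.1 * g p.2} :=
    measurableSet_lt measurable_const (measurable_fst.mul (hg.comp measurable_snd))
  simp only [← upperTail_mul_const hR ha]
  exact measureReal_pair_mem_eq_intervalIntegral hRm hΘm hΘunif hindep hS

theorem upperTail_abs_cos_add_sin_eq_two_mul (hRm : Measurable R) (hΘm : Measurable Θ)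
    (hR : ∀ᵐ ω ∂μ, 0 ≤ R ω)
    (hΘunif : μ.map Θ = (ENNReal.ofReal (2 * π))⁻¹ • volume.restrict (Ioo (-π) π))
    (hindep : IndepFun R Θ μ) (hT : IsWeibullTail (upperTail μ R) α)
    (hρ : ρ ∈ Icc (0 : ℝ) 1) (ha : 0 ≤ a) (haρ : 1 - a ^ 2 ≤ ρ ^ 2) :
    upperTail μ (fun ω => ρ * |R ω * cos (Θ ω)| + √(1 - ρ ^ 2) * (R ω * sin (Θ ω))) a
      = 2 * upperTail μ (fun ω => R ω * cos (Θ ω)) a := by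
  have hpolar : (fun ω => ρ * |R ω * cos (Θ ω)| + √(1 - ρ ^ 2) * (R ω * sin (Θ ω)))
      =ᵐ[μ] fun ω => R ω * (ρ * |cos (Θ ω)| + √(1 - ρ ^ 2) * sin (Θ ω)) := by
    filter_upwards [hR] with ω hω
    rw [abs_mul, abs_of_nonneg hω]
    ring
  rw [upperTail_congr hpolar,
    upperTail_mul_comp_eq_integral hRm hΘm hR hΘunif hindep
      (g := fun θ => ρ * |cos θ| + √(1 - ρ ^ 2) * sin θ) (by fun_prop) ha,
    upperTail_mul_comp_eq_integral hRm hΘm hR hΘunif hindep measurable_cos ha,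
    integral_comp_abs_cos_add_sin_of_eq_zero (hT.monotone_scaledTail ha)
      (fun c hc => hT.scaledTail_eq_zero hc) hρ ha haρ]
  ring

theorem tendsto_upperTail_mul_cos_div (hRm : Measurable R) (hΘm : Measurable Θ)
    (hR : ∀ᵐ ω ∂μ, 0 ≤ R ω)
    (hΘunif : μ.map Θ = (ENNReal.ofReal (2 * π))⁻¹ • volume.restrict (Ioo (-π) π))
    (hindep : IndepFun R Θ μ) (hT : IsWeibullTail (upperTail μ R) α) (hy : 0 < y) :
    Tendsto (fun t => upperTail μ (fun ω => R ω * cos (Θ ω)) (1 - t * y) /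
      (√t * upperTail μ R (1 - t))) (𝓝[>] 0) (𝓝 (Ialpha α * y ^ (1 / 2 + α))) := by
  have hlim := (hT.tendsto_integral_scaledTail_cos_div hy).const_mul (2 * π)⁻¹
  rw [inv_mul_cancel_left₀ (by positivity)] at hlim
  refine hlim.congr' ?_
  filter_upwards [eventually_mul_le_one y] with t ht
  rw [upperTail_mul_comp_eq_integral hRm hΘm hR hΘunif hindep measurable_cos (sub_nonneg.2 ht),
    mul_div_assoc]

end Polar

section DistributionFunction

variable {Ω : Type*} [MeasurableSpace Ω] {μ : Measure Ω} [IsProbabilityMeasure μ] {R : Ω → ℝ}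

lemma one_sub_measureReal_le_eq_upperTail (hRm : Measurable R) (c : ℝ) :
    1 - μ.real {ω | R ω ≤ c} = upperTail μ R c := by
  rw [← probReal_compl_eq_one_sub (measurableSet_le hRm measurable_const)]
  simp only [upperTail, compl_ofPred, not_le]

lemma isWeibullTail_upperTail (hRm : Measurable R) {α : ℝ} (hα : 0 < α)
    (hone : ∀ c, 1 ≤ c → μ.real {ω | R ω ≤ c} = 1)
    (hratio : ∀ y > 0, Tendsto (fun t => (1 - μ.real {ω | R ω ≤ 1 - t * y}) /
      (1 - μ.real {ω | R ω ≤ 1 - t})) (𝓝[>] 0) (𝓝 (y ^ α))) :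
    IsWeibullTail (upperTail μ R) α where
  index_pos := hα
  antitone := antitone_upperTail R
  eq_zero_of_one_le c hc := by
    rw [← one_sub_measureReal_le_eq_upperTail hRm, hone c hc, sub_self]
  tendsto_ratio := by simpa only [one_sub_measureReal_le_eq_upperTail hRm] using hratio

end DistributionFunction

section HalfSkew

variable {ι : Type*} {l : Filter ι} {u ρ : ι → ℝ}

lemma isLittleO_sq_of_tendsto_one_sub_div {c : ℝ} (hu : Tendsto u l (𝓝[≠] 0))
    (h : Tendsto (fun i => (1 - ρ i) / u i) l (𝓝 c)) : u =o[l] fun i => ρ i ^ 2 := by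
  obtain ⟨hu0, hune⟩ := tendsto_nhdsWithin_iff.1 hu
  have hρ : Tendsto ρ l (𝓝 1) := by
    have hlim := (h.mul hu0).const_sub 1
    rw [mul_zero, sub_zero] at hlim
    refine hlim.congr' ?_
    filter_upwards [hune] with i hi
    rw [div_mul_cancel₀ _ hi, sub_sub_cancel]
  have hρsq : Tendsto (fun i => ρ i ^ 2) l (𝓝 1) := by simpa using hρ.pow 2
  refine (Asymptotics.isLittleO_iff_tendsto' ?_).2
    (by simpa [Pi.div_def] using hu0.div hρsq one_ne_zero)
  filter_upwards [hρsq.eventually_ne one_ne_zero] with i hi h0 using absurd h0 hi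

lemma eventually_one_sub_sq_le_sq (huρ : u =o[l] fun i => ρ i ^ 2) (x : ℝ) :
    ∀ᶠ i in l, 1 - (1 + u i * x) ^ 2 ≤ ρ i ^ 2 := by
  filter_upwards [(huρ.const_mul_left (-2 * x)).bound one_pos] with i hi
  rw [one_mul, Real.norm_of_nonneg (sq_nonneg (ρ i))] at hi
  linarith [Real.le_norm_self (-2 * x * u i), sq_nonneg (u i * x)]

variable {Ω : Type*} [MeasurableSpace Ω] {μ : Measure Ω} [IsFiniteMeasure μ] {R Θ : Ω → ℝ}

theorem tail_half_skew_weibull_general (hRm : Measurable R) (hΘm : Measurable Θ)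
    (hR : ∀ᵐ ω ∂μ, 0 ≤ R ω)
    (hΘunif : μ.map Θ = (ENNReal.ofReal (2 * π))⁻¹ • volume.restrict (Ioo (-π) π))
    (hindep : IndepFun R Θ μ) {α : ℝ} (hT : IsWeibullTail (upperTail μ R) α)
    (hu : Tendsto u l (𝓝[>] 0)) (hρ : ∀ i, ρ i ∈ Icc (0 : ℝ) 1)
    (huρ : u =o[l] fun i => ρ i ^ 2) {x : ℝ} (hx : x < 0) :
    Tendsto (fun i => upperTail μ
        (fun ω => ρ i * |R ω * cos (Θ ω)| + √(1 - ρ i ^ 2) * (R ω * sin (Θ ω))) (1 + u i * x) /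
          (√(u i) * upperTail μ R (1 - u i)))
      l (𝓝 (2 * Ialpha α * |x| ^ (1 / 2 + α))) := by
  have hlim := ((tendsto_upperTail_mul_cos_div hRm hΘm hR hΘunif hindep hT
    (abs_pos.2 hx.ne)).comp hu).const_mul 2
  rw [← mul_assoc] at hlim
  refine hlim.congr' ?_
  filter_upwards [eventually_one_sub_sq_le_sq huρ x, hu.eventually (eventually_mul_le_one |x|)]
    with i hcaps hnonneg
  have ha : 1 - u i * |x| = 1 + u i * x := by rw [abs_of_neg hx]; ring
  rw [← sub_nonneg, ha] at hnonneg
  rw [upperTail_abs_cos_add_sin_eq_two_mul hRm hΘm hR hΘunif hindep hT (hρ i) hnonneg hcaps,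
    Function.comp_apply, ha, mul_div_assoc]

end HalfSkew

theorem tail_half_skew_weibull
{Ω : Type*} [MeasurableSpace Ω] (μ : Measure Ω) [IsProbabilityMeasure μ]
    (R Θ : Ω → ℝ) (hRm : Measurable R) (hΘm : Measurable Θ)
    (hRpos : ∀ᵐ ω ∂μ, 0 < R ω)
    (hΘunif : μ.map Θ = (ENNReal.ofReal (2 * π))⁻¹ • volume.restrict (Ioo (-π) π))
    (hindep : IndepFun R Θ μ)
    (X Y : Ω → ℝ)
    (hX : X = fun ω => R ω * Real.cos (Θ ω))
    (hY : Y = fun ω => R ω * Real.sin (Θ ω))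
    (F : ℝ → ℝ)
    (hF : F = fun x => (μ {ω | R ω ≤ x}).toReal)
    (hend1 : ∀ x < 1, F x < 1) (hend2 : ∀ x, 1 ≤ x → F x = 1)
    (α : ℝ) (hα : 0 < α)
    (hWeibull : ∀ x > 0, Tendsto (fun t => (1 - F (1 - t * x)) / (1 - F (1 - t)))
      (nhdsWithin 0 (Ioi 0)) (𝓝 (x ^ α)))
    (u : ℕ → ℝ) (hupos : ∀ n, 0 < u n) (hudec : StrictAnti u)
    (hu0 : Tendsto u atTop (𝓝 0))
    (ρ : ℕ → ℝ) (hρ : ∀ n, ρ n ∈ Ioc (0 : ℝ) 1)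
    (lam : ℝ) (hlam : 0 ≤ lam)
    (hHR : Tendsto (fun n : ℕ => (1 - ρ n) / u n) atTop (𝓝 (2 * lam ^ 2))) :
    ∀ x < (0 : ℝ),
      Tendsto (fun n : ℕ =>
          (μ {ω | 1 + u n * x < ρ n * |X ω| + Real.sqrt (1 - ρ n ^ 2) * Y ω}).toReal /
            (Real.sqrt (u n) * (1 - F (1 - u n))))
        atTop (𝓝 (2 * Ialpha α * |x| ^ (1 / 2 + α))) := by
  intro x hx
  subst hX hY hF
  have hu : Tendsto u atTop (𝓝[>] 0) := tendsto_nhdsWithin_iff.2 ⟨hu0, .of_forall hupos⟩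
  have huρ := isLittleO_sq_of_tendsto_one_sub_div (hu.mono_right (nhdsGT_le_nhdsNE 0)) hHR
  have hT := isWeibullTail_upperTail hRm hα hend2 hWeibull
  simp only [← measureReal_def, one_sub_measureReal_le_eq_upperTail hRm]
  exact tail_half_skew_weibull_general hRm hΘm (hRpos.mono fun _ => le_of_lt) hΘunif hindep hT hu
    (fun n => Ioc_subset_Icc_self (hρ n)) huρ hx
end

section
/- For all x > 0 and y > 0, P(X > x, ρ|X| + √(1-ρ²)·Y > y) = P(R·cos Θ > x, Θ ∈ (β, π/2)) + P(R·cos(Θ - ψ) > y, Θ ∈ (-π/2 + ψ, β)), where ψ = arccos ρ and β = arctan((y/x - ρ)/√(1-ρ²)). -/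
/-!
On the event the first coordinate `X` is positive, so `|X| = X` and the second condition reads
`y < R cos (Θ - ψ)`, where `ψ = arccos ρ`. The positivity of `cos Θ` and of `cos (Θ - ψ)` confines
`Θ` to `(ψ - π / 2, π / 2)`. There the ratio `cos (θ - ψ) / cos θ = ρ + √(1 - ρ²) tan θ` is strictly
increasing and takes the value `y / x` at `β`, so for `Θ > β` the condition `x < R cos Θ` implies
`y < R cos (Θ - ψ)`, and for `Θ < β` the implication is reversed.
-/

open MeasureTheory Filter Real Set ProbabilityTheory Topology

/-- The angle `β` at which the increasing ratio `cos (t - arccos ρ) / cos t`, `|t| < π / 2`, takes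
the value `c`; the arctangent form solves `ρ + √(1 - ρ ^ 2) * tan t = c`. -/
noncomputable def crossingAngle (ρ c : ℝ) : ℝ :=
  arctan ((c - ρ) / √(1 - ρ ^ 2))

section Angles

variable {ρ c t : ℝ}

lemma cos_sub_arccos (hρ : ρ ∈ Icc (-1) 1) (t : ℝ) :
    cos (t - arccos ρ) = ρ * cos t + √(1 - ρ ^ 2) * sin t := by
  rw [cos_sub, cos_arccos hρ.1 hρ.2, sin_arccos]
  ring

lemma cos_sub_arccos_eq_mul_cos (hρ : ρ ∈ Icc (-1) 1) (ht : cos t ≠ 0) :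
    cos (t - arccos ρ) = (ρ + √(1 - ρ ^ 2) * tan t) * cos t := by
  rw [cos_sub_arccos hρ, add_mul, mul_assoc, tan_mul_cos ht]

lemma sqrt_one_sub_sq_pos (hρ : ρ ∈ Ioo (-1) 1) : 0 < √(1 - ρ ^ 2) :=
  sqrt_pos.2 (sub_pos.2 ((sq_lt_one_iff_abs_lt_one ρ).2 (abs_lt.2 hρ)))

lemma crossingAngle_lt_iff (hρ : ρ ∈ Ioo (-1) 1) (ht : t ∈ Ioo (-(π / 2)) (π / 2)) :
    crossingAngle ρ c < t ↔ c * cos t < cos (t - arccos ρ) := by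
  have hcos : 0 < cos t := cos_pos_of_mem_Ioo ht
  rw [cos_sub_arccos_eq_mul_cos (Ioo_subset_Icc_self hρ) hcos.ne', mul_lt_mul_iff_left₀ hcos,
    ← sub_lt_iff_lt_add', ← div_lt_iff₀' (sqrt_one_sub_sq_pos hρ),
    ← arctan_lt_arctan_iff (y := tan t), arctan_tan ht.1 ht.2, crossingAngle]

lemma lt_crossingAngle_iff (hρ : ρ ∈ Ioo (-1) 1) (ht : t ∈ Ioo (-(π / 2)) (π / 2)) :
    t < crossingAngle ρ c ↔ cos (t - arccos ρ) < c * cos t := by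
  have hcos : 0 < cos t := cos_pos_of_mem_Ioo ht
  rw [cos_sub_arccos_eq_mul_cos (Ioo_subset_Icc_self hρ) hcos.ne', mul_lt_mul_iff_left₀ hcos,
    ← lt_sub_iff_add_lt', ← lt_div_iff₀' (sqrt_one_sub_sq_pos hρ),
    ← arctan_lt_arctan_iff (x := tan t), arctan_tan ht.1 ht.2, crossingAngle]

lemma abs_lt_pi_div_two_of_cos_pos (ht : |t| ≤ π + π / 2) (hcos : 0 < cos t) : |t| < π / 2 := by
  by_contra! h
  exact (cos_nonpos_of_pi_div_two_le_of_le h ht).not_gt (by rwa [cos_abs])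

lemma mem_Ioo_of_cos_pos_of_cos_sub_arccos_pos (ht : |t| ≤ π) (hcos : 0 < cos t)
    (hcos_sub : 0 < cos (t - arccos ρ)) : t ∈ Ioo (-(π / 2) + arccos ρ) (π / 2) := by
  have habs : |t| < π / 2 := abs_lt_pi_div_two_of_cos_pos (by linarith [pi_pos]) hcos
  obtain ⟨hlower, hupper⟩ := abs_lt.1 habs
  have hsub : |t - arccos ρ| < π / 2 :=
    abs_lt_pi_div_two_of_cos_pos
      (abs_le.2 ⟨by linarith [arccos_le_pi ρ], by linarith [arccos_nonneg ρ]⟩) hcos_sub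
  exact ⟨by linarith [(abs_lt.1 hsub).1], hupper⟩

end Angles

section Sectors

variable {ρ r t x y : ℝ}

lemma mul_abs_add_sqrt_mul_eq_mul_cos_sub_arccos (hρ : ρ ∈ Icc (-1) 1) (h : 0 ≤ r * cos t) :
    ρ * |r * cos t| + √(1 - ρ ^ 2) * (r * sin t) = r * cos (t - arccos ρ) := by
  rw [abs_of_nonneg h, cos_sub_arccos hρ]
  ring

lemma lt_mul_cos_sub_arccos_of_crossingAngle_lt (hρ : ρ ∈ Ioo (-1) 1) (hx : 0 < x) (hy : 0 < y)
    (hr : 0 ≤ r) (ht : t ∈ Ioo (-(π / 2)) (π / 2)) (hβ : crossingAngle ρ (y / x) < t)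
    (h : x < r * cos t) : y < r * cos (t - arccos ρ) :=
  calc
    y = y / x * x := (div_mul_cancel₀ y hx.ne').symm
    _ < y / x * (r * cos t) := mul_lt_mul_of_pos_left h (div_pos hy hx)
    _ = r * (y / x * cos t) := mul_left_comm ..
    _ ≤ r * cos (t - arccos ρ) :=
      mul_le_mul_of_nonneg_left ((crossingAngle_lt_iff hρ ht).1 hβ).le hr

lemma lt_mul_cos_of_lt_crossingAngle (hρ : ρ ∈ Ioo (-1) 1) (hx : 0 < x) (hy : 0 < y)
    (hr : 0 ≤ r) (ht : t ∈ Ioo (-(π / 2)) (π / 2)) (hβ : t < crossingAngle ρ (y / x))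
    (h : y < r * cos (t - arccos ρ)) : x < r * cos t := by
  refine lt_of_mul_lt_mul_left ?_ (div_pos hy hx).le
  calc
    y / x * x = y := div_mul_cancel₀ y hx.ne'
    _ < r * cos (t - arccos ρ) := h
    _ ≤ r * (y / x * cos t) :=
      mul_le_mul_of_nonneg_left ((lt_crossingAngle_iff hρ ht).1 hβ).le hr
    _ = y / x * (r * cos t) := mul_left_comm ..

lemma joint_tail_iff_lt_mul_cos_and (hρ : ρ ∈ Icc (-1) 1) (hx : 0 ≤ x) :
    (x < r * cos t ∧ y < ρ * |r * cos t| + √(1 - ρ ^ 2) * (r * sin t)) ↔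
      x < r * cos t ∧ y < r * cos (t - arccos ρ) :=
  and_congr_right fun h => by
    rw [mul_abs_add_sqrt_mul_eq_mul_cos_sub_arccos hρ (hx.trans h.le)]

lemma mem_Ioo_of_lt_mul_cos_of_lt_mul_cos_sub_arccos (hx : 0 ≤ x) (hy : 0 ≤ y) (hr : 0 ≤ r)
    (ht : |t| ≤ π) (hxr : x < r * cos t) (hyr : y < r * cos (t - arccos ρ)) :
    t ∈ Ioo (-(π / 2) + arccos ρ) (π / 2) :=
  mem_Ioo_of_cos_pos_of_cos_sub_arccos_pos ht (pos_of_mul_pos_right (hx.trans_lt hxr) hr)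
    (pos_of_mul_pos_right (hy.trans_lt hyr) hr)

lemma joint_tail_iff_of_crossingAngle_lt (hρ : ρ ∈ Ioo (-1) 1) (hx : 0 < x) (hy : 0 < y)
    (hr : 0 ≤ r) (ht : |t| ≤ π) (hβ : crossingAngle ρ (y / x) < t) :
    (x < r * cos t ∧ y < ρ * |r * cos t| + √(1 - ρ ^ 2) * (r * sin t)) ↔
      x < r * cos t ∧ t ∈ Ioo (crossingAngle ρ (y / x)) (π / 2) := by
  rw [joint_tail_iff_lt_mul_cos_and (Ioo_subset_Icc_self hρ) hx.le]
  refine and_congr_right fun hxr => ⟨fun hyr => ⟨hβ, ?_⟩, fun htβ => ?_⟩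
  · exact (mem_Ioo_of_lt_mul_cos_of_lt_mul_cos_sub_arccos hx.le hy.le hr ht hxr hyr).2
  · exact lt_mul_cos_sub_arccos_of_crossingAngle_lt hρ hx hy hr
      ⟨(neg_pi_div_two_lt_arctan _).trans hβ, htβ.2⟩ hβ hxr

lemma joint_tail_iff_of_lt_crossingAngle (hρ : ρ ∈ Ioo (-1) 1) (hx : 0 < x) (hy : 0 < y)
    (hr : 0 ≤ r) (ht : |t| ≤ π) (hβ : t < crossingAngle ρ (y / x)) :
    (x < r * cos t ∧ y < ρ * |r * cos t| + √(1 - ρ ^ 2) * (r * sin t)) ↔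
      y < r * cos (t - arccos ρ) ∧
        t ∈ Ioo (-(π / 2) + arccos ρ) (crossingAngle ρ (y / x)) := by
  rw [joint_tail_iff_lt_mul_cos_and (Ioo_subset_Icc_self hρ) hx.le, and_comm]
  refine and_congr_right fun hyr => ⟨fun hxr => ⟨?_, hβ⟩, fun htβ => ?_⟩
  · exact (mem_Ioo_of_lt_mul_cos_of_lt_mul_cos_sub_arccos hx.le hy.le hr ht hxr hyr).1
  · exact lt_mul_cos_of_lt_crossingAngle hρ hx hy hr
      ⟨by linarith [htβ.1, arccos_nonneg ρ], hβ.trans (arctan_lt_pi_div_two _)⟩ hβ hyr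

end Sectors

lemma ae_of_map_eq_smul {α β : Type*} [MeasurableSpace α] [MeasurableSpace β] {μ : Measure α}
    {ν : Measure β} {f : α → β} {c : ENNReal} {p : β → Prop} (hf : AEMeasurable f μ)
    (hmap : μ.map f = c • ν) (hp : ∀ᵐ b ∂ν, p b) : ∀ᵐ a ∂μ, p (f a) :=
  ae_of_ae_map hf (hmap ▸ Measure.ae_smul_measure hp c)

theorem polar_decomposition_joint_tail_general
    {Ω : Type*} [MeasurableSpace Ω] {μ : Measure Ω} {R Θ X Y : Ω → ℝ} {ρ x y : ℝ}
    (hΘm : AEMeasurable Θ μ) (hR : ∀ᵐ ω ∂μ, 0 ≤ R ω) (hΘ : ∀ᵐ ω ∂μ, |Θ ω| ≤ π)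
    (hΘβ : ∀ᵐ ω ∂μ, Θ ω ≠ crossingAngle ρ (y / x))
    (hX : X = fun ω => R ω * cos (Θ ω)) (hY : Y = fun ω => R ω * sin (Θ ω))
    (hρ : ρ ∈ Ioo (-1) 1) (hx : 0 < x) (hy : 0 < y) :
    μ {ω | x < X ω ∧ y < ρ * |X ω| + √(1 - ρ ^ 2) * Y ω} =
      μ {ω | x < R ω * cos (Θ ω) ∧ Θ ω ∈ Ioo (crossingAngle ρ (y / x)) (π / 2)} +
      μ {ω | y < R ω * cos (Θ ω - arccos ρ) ∧
        Θ ω ∈ Ioo (-(π / 2) + arccos ρ) (crossingAngle ρ (y / x))} := by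
  subst hX hY
  have habove : NullMeasurableSet {ω | crossingAngle ρ (y / x) < Θ ω} μ :=
    nullMeasurableSet_lt aemeasurable_const hΘm
  rw [← measure_inter_add_sdiff₀ _ habove]
  congr 1 <;> refine measure_congr (eventuallyEq_set.2 ?_)
  · filter_upwards [hR, hΘ] with ω hr ht
    have hiff := joint_tail_iff_of_crossingAngle_lt hρ hx hy hr ht
    exact ⟨fun ⟨hE, hβ⟩ => (hiff hβ).1 hE, fun hA => ⟨(hiff hA.2.1).2 hA, hA.2.1⟩⟩
  · filter_upwards [hR, hΘ, hΘβ] with ω hr ht hne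
    have hiff := joint_tail_iff_of_lt_crossingAngle hρ hx hy hr ht
    exact ⟨fun ⟨hE, hβ⟩ => (hiff ((not_lt.1 hβ).lt_of_ne hne)).1 hE,
      fun hB => ⟨(hiff hB.2.2).2 hB, hB.2.2.not_gt⟩⟩

theorem polar_decomposition_joint_tail
    {Ω : Type*} [MeasurableSpace Ω] (μ : Measure Ω) [IsProbabilityMeasure μ]
    (R Θ : Ω → ℝ) (hRm : Measurable R) (hΘm : Measurable Θ)
    (hRpos : ∀ᵐ ω ∂μ, 0 < R ω)
    (hΘunif : μ.map Θ = (ENNReal.ofReal (2 * π))⁻¹ • volume.restrict (Ioo (-π) π))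
    (hindep : IndepFun R Θ μ)
    (X Y : Ω → ℝ)
    (hX : X = fun ω => R ω * Real.cos (Θ ω))
    (hY : Y = fun ω => R ω * Real.sin (Θ ω))
    (ρ : ℝ) (hρ : ρ ∈ Ioo (0 : ℝ) 1)
    (x y : ℝ) (hx : 0 < x) (hy : 0 < y) :
    (μ {ω | x < X ω ∧ y < ρ * |X ω| + Real.sqrt (1 - ρ ^ 2) * Y ω}).toReal =
      (μ {ω | x < R ω * Real.cos (Θ ω) ∧
        Θ ω ∈ Ioo (Real.arctan ((y / x - ρ) / Real.sqrt (1 - ρ ^ 2))) (π / 2)}).toReal +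
      (μ {ω | y < R ω * Real.cos (Θ ω - Real.arccos ρ) ∧
        Θ ω ∈ Ioo (-(π / 2) + Real.arccos ρ)
          (Real.arctan ((y / x - ρ) / Real.sqrt (1 - ρ ^ 2)))}).toReal := by
  have hΘ : ∀ᵐ ω ∂μ, |Θ ω| ≤ π := ae_of_map_eq_smul hΘm.aemeasurable hΘunif <|
    (ae_restrict_mem measurableSet_Ioo).mono fun _ ht => (abs_lt.2 ht).le
  have hΘβ : ∀ᵐ ω ∂μ, Θ ω ≠ crossingAngle ρ (y / x) :=
    ae_of_map_eq_smul (p := (· ≠ _)) hΘm.aemeasurable hΘunif <|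
      ae_restrict_of_ae (Measure.ae_ne volume _)
  have htail := polar_decomposition_joint_tail_general hΘm.aemeasurable
    (hRpos.mono fun _ => le_of_lt) hΘ hΘβ hX hY ⟨by linarith [hρ.1], hρ.2⟩ hx hy
  exact (congrArg ENNReal.toReal htail).trans
    (ENNReal.toReal_add (measure_ne_top _ _) (measure_ne_top _ _))
end
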